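/- arXiv:math/9903094 — 2 statements merged into one kernel-verified Lean document; each statement's English description precedes it below -/
import Mathlib

section
/- Suppose every transitive ordered factorisation of any π ∈ S_n into transpositions has at least n + κ(π) − 2 factors, with equality achievable. Then for k ≥ 2, any minimal transitive ordered factorisation of π ∈ S_n into k-cycles has exactly (n + κ(π) − 2)/(k−1) factors, provided (k−1) divides n + κ(π) − 2; in particular μ₂([k]) · μ_k(π) = μ₂(cycle type of π), where μ₂([k]) = k − 1. -/
/-- The number of cycles of a permutation of `Fin n`, counting fixed points. -/
def kappa {n : ℕ} (σ : Equiv.Perm (Fin n)) : ℕ :=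
  σ.cycleType.card + (n - σ.support.card)

/-- `L` is a transitive ordered factorisation of `π` into `k`-cycles. -/
def IsTransKFact (n k : ℕ) (L : List (Equiv.Perm (Fin n))) (π : Equiv.Perm (Fin n)) : Prop :=
  (∀ σ ∈ L, σ.IsCycle ∧ σ.support.card = k) ∧ L.prod = π ∧
    ∀ a b : Fin n, ∃ g ∈ Subgroup.closure {σ | σ ∈ L}, g a = b

/-!
Writing each `k`-cycle of a factorisation as a product of `k - 1` transpositions turns a transitive
factorisation into `k`-cycles into a transitive factorisation into `k - 1` times as many
transpositions, so the lower bound for transpositions gives `L.length * (k - 1) ≥ n + κ(π) - 2`.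

For the converse, `List.formPerm [x₁, …, xᵣ]` is the product `(x₁ x₂)(x₂ x₃)⋯(xᵣ₋₁ xᵣ)` even when
letters repeat, and replacing a letter `a` of a word by `a C a` multiplies this product by the
cycle `C` if `C` is disjoint from the word. Merging up to `k` cycles of `π` in this way yields one
word, and the places of insertion can be chosen so that its first `k` letters are distinct and so
are the letters from the `k`-th on. The first `k` letters form a `k`-cycle, and removing it from `π`
leaves a permutation for which the number of points plus the number of cycles has dropped by
`k - 1`. Iterating uses exactly `(n + κ(π) - 2) / (k - 1)` cycles.
-/

section FormPerm

open List

variable {α : Type*} [DecidableEq α]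

theorem formPerm_append_cons (X Y : List α) (a : α) :
    formPerm (X ++ a :: Y) = formPerm (X ++ [a]) * formPerm (a :: Y) := by
  induction X with
  | nil => simp
  | cons x X ih => cases X <;> simp_all [mul_assoc]

theorem formPerm_cons_append_singleton_self {C : List α} {a : α} (hC : C.Nodup) (ha : a ∉ C) :
    formPerm (a :: (C ++ [a])) = formPerm C := by
  cases C with
  | nil => simp [Equiv.Perm.one_def]
  | cons c C =>
    have rotate : formPerm (c :: C ++ [a]) = formPerm (a :: c :: C) := by
      simpa using formPerm_rotate_one (a :: c :: C) (hC.cons ha)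
    rw [cons_append, formPerm_cons_cons, ← cons_append, rotate, formPerm_cons_cons,
      Equiv.swap_mul_self_mul]

theorem commute_formPerm_of_disjoint {l l' : List α} (h : l.Disjoint l') :
    Commute (formPerm l) (formPerm l') :=
  Equiv.Perm.Disjoint.commute fun x ↦ by
    by_cases hx : x ∈ l
    · exact .inr (formPerm_apply_of_notMem (h hx))
    · exact .inl (formPerm_apply_of_notMem hx)

theorem formPerm_insert_cycle {C X : List α} {a : α} (Y : List α) (hC : C.Nodup)
    (hdisj : C.Disjoint (X ++ [a])) :
    formPerm (X ++ a :: (C ++ a :: Y)) = formPerm C * formPerm (X ++ a :: Y) := by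
  have ha : a ∉ C := fun h ↦ hdisj h (by simp)
  calc formPerm (X ++ a :: (C ++ a :: Y))
      = formPerm (X ++ [a]) * (formPerm (a :: (C ++ [a])) * formPerm (a :: Y)) := by
        rw [formPerm_append_cons, ← cons_append, formPerm_append_cons (a :: C), cons_append]
    _ = formPerm C * (formPerm (X ++ [a]) * formPerm (a :: Y)) := by
        rw [formPerm_cons_append_singleton_self hC ha, ← mul_assoc, ← mul_assoc,
          (commute_formPerm_of_disjoint hdisj).eq]
    _ = formPerm C * formPerm (X ++ a :: Y) := by rw [← formPerm_append_cons]

theorem exists_nodup_formPerm_eq [Fintype α] {σ : Equiv.Perm α} (hσ : σ.IsCycle) :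
    ∃ l : List α, l.Nodup ∧ l.formPerm = σ ∧ l.toFinset = σ.support := by
  obtain ⟨x, hx, -⟩ := id hσ
  have hform : formPerm (σ.toList x) = σ := by rw [Equiv.Perm.formPerm_toList, hσ.cycleOf_eq hx]
  refine ⟨σ.toList x, Equiv.Perm.nodup_toList σ x, hform, ?_⟩
  rw [← support_formPerm_of_nodup _ (Equiv.Perm.nodup_toList σ x)
    (Equiv.Perm.toList_ne_singleton σ x), hform]

theorem support_formPerm_of_two_le_length [Fintype α] {l : List α} (hl : l.Nodup)
    (hlen : 2 ≤ l.length) : l.formPerm.support = l.toFinset :=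
  support_formPerm_of_nodup l hl (by rintro x rfl; simp at hlen)

theorem isSwap_of_mem_zipWith_swap_tail {l : List α} (hl : l.Nodup) {τ : Equiv.Perm α}
    (hτ : τ ∈ zipWith Equiv.swap l l.tail) : τ.IsSwap := by
  obtain ⟨i, hi, rfl⟩ := mem_iff_getElem.1 hτ
  simp only [length_zipWith, length_tail] at hi
  refine ⟨l[i], l[i + 1], ?_, by simp⟩
  simp [hl.getElem_inj_iff]

end FormPerm

section CycleNotation

open List

variable {α : Type*}

/-- `ls` is cycle notation for `π`, each list being a cycle to be read with `List.formPerm`. Fixed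
points of `π` may be left out or be listed as cycles of length one. -/
structure IsCycleNotation [DecidableEq α] (ls : List (List α)) (π : Equiv.Perm α) : Prop where
  ne_nil : ∀ l ∈ ls, l ≠ []
  nodup : ls.flatten.Nodup
  prod_eq : (ls.map formPerm).prod = π

theorem length_le_length_flatten {ls : List (List α)} (h : ∀ l ∈ ls, l ≠ []) :
    ls.length ≤ ls.flatten.length := by
  rw [length_flatten, ← length_map (f := length)]
  refine length_le_sum_of_one_le _ fun i hi ↦ ?_
  obtain ⟨l, hl, rfl⟩ := mem_map.1 hi
  exact length_pos_iff.2 (h l hl)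

variable [DecidableEq α]

namespace IsCycleNotation

variable {ls ls' : List (List α)} {π ρ : Equiv.Perm α}

theorem append (h : IsCycleNotation ls π) (h' : IsCycleNotation ls' ρ)
    (hdisj : ls.flatten.Disjoint ls'.flatten) : IsCycleNotation (ls ++ ls') (π * ρ) where
  ne_nil l hl := (mem_append.1 hl).elim (h.ne_nil l) (h'.ne_nil l)
  nodup := by rw [flatten_append]; exact h.nodup.append h'.nodup hdisj
  prod_eq := by rw [map_append, prod_append, h.prod_eq, h'.prod_eq]

theorem map_singleton {l : List α} (hl : l.Nodup) : IsCycleNotation (l.map fun x ↦ [x]) 1 where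
  ne_nil := by simp
  nodup := by simpa [← flatMap_def] using hl
  prod_eq := prod_eq_one (by simp)

theorem exists_mem_flatten_iff_mem_support [Fintype α] (π : Equiv.Perm α) :
    ∃ ls : List (List α), IsCycleNotation ls π ∧ ls.length = π.cycleType.card ∧
      ∀ x, x ∈ ls.flatten ↔ x ∈ π.support := by
  induction π using Equiv.Perm.cycle_induction_on with
  | base_one => exact ⟨[], ⟨by simp, by simp, rfl⟩, by simp, by simp⟩
  | base_cycles σ hσ =>
    obtain ⟨l, hnodup, hform, hsupp⟩ := exists_nodup_formPerm_eq hσ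
    have hne : l ≠ [] := by
      rintro rfl
      exact hσ.ne_one hform.symm
    exact ⟨[l], ⟨by simpa using hne, by simpa using hnodup, by simpa using hform⟩,
      by simp [hσ.cycleType], by simp [← hsupp]⟩
  | induction_disjoint σ τ hdisj _ ihσ ihτ =>
    obtain ⟨ls, hls, hcard, hmem⟩ := ihσ
    obtain ⟨ls', hls', hcard', hmem'⟩ := ihτ
    refine ⟨ls ++ ls', hls.append hls' fun x hx hx' ↦ ?_, ?_, fun x ↦ ?_⟩
    · exact Finset.disjoint_left.1 hdisj.disjoint_support ((hmem x).1 hx) ((hmem' x).1 hx')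
    · rw [length_append, hdisj.cycleType_mul, Multiset.card_add, hcard, hcard']
    · rw [flatten_append, mem_append, hmem, hmem', hdisj.support_mul, Finset.mem_union]

theorem exists_forall_mem_flatten [Fintype α] (π : Equiv.Perm α) :
    ∃ ls : List (List α), IsCycleNotation ls π ∧
      ls.length = π.cycleType.card + (Fintype.card α - π.support.card) ∧
      ∀ x, x ∈ ls.flatten := by
  obtain ⟨ls, hls, hcard, hmem⟩ := exists_mem_flatten_iff_mem_support π
  have hfixed := map_singleton π.supportᶜ.nodup_toList
  refine ⟨ls ++ π.supportᶜ.toList.map fun x ↦ [x], ?_, ?_, fun x ↦ ?_⟩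
  · simpa using hls.append hfixed fun x hx ↦ by simpa [← flatMap_def] using (hmem x).1 hx
  · rw [length_append, length_map, hcard, Finset.length_toList, Finset.card_compl]
  · rw [flatten_append, mem_append, hmem, ← flatMap_def, flatMap_singleton', Finset.mem_toList,
      Finset.mem_compl]
    exact em _

end IsCycleNotation

/-- The word `X ++ a :: Y` represents the product of the cycles `ls` on the same set of points, and
repeats letters only across its marked letter `a`: both the part up to `a` and the part from `a`
on are free of repetitions. -/
structure IsSplitWord (ls : List (List α)) (X : List α) (a : α) (Y : List α) : Prop where
  formPerm_eq : formPerm (X ++ a :: Y) = (ls.map formPerm).prod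
  nodup_left : (X ++ [a]).Nodup
  nodup_right : (a :: Y).Nodup
  mem_iff : ∀ x, x ∈ X ++ a :: Y ↔ x ∈ ls.flatten
  length_eq : (X ++ a :: Y).length + 1 = ls.flatten.length + ls.length

namespace IsSplitWord

variable {ls ls' : List (List α)} {X Y : List α} {a : α} {π : Equiv.Perm α}

theorem singleton (h : (X ++ a :: Y).Nodup) : IsSplitWord [X ++ a :: Y] X a Y where
  formPerm_eq := by simp
  nodup_left := by
    rw [← concat_append, concat_eq_append] at h
    exact h.of_append_left
  nodup_right := h.of_append_right
  mem_iff := by simp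
  length_eq := by simp

theorem cons {A B : List α} {b : α} (h : IsSplitWord ls X a Y) (hC : (B ++ b :: A).Nodup)
    (hdisj : (B ++ b :: A).Disjoint ls.flatten) :
    IsSplitWord ((B ++ b :: A) :: ls) (X ++ a :: B) b (A ++ a :: Y) where
  formPerm_eq := by
    have hX : (B ++ b :: A).Disjoint (X ++ [a]) := fun x hx hx' ↦
      hdisj hx ((h.mem_iff x).1 (by grind))
    simpa [h.formPerm_eq] using formPerm_insert_cycle Y hC hX
  nodup_left := by
    have hX : (X ++ [a]).Disjoint (B ++ [b]) := fun x hx hx' ↦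
      hdisj (by grind) ((h.mem_iff x).1 (by grind))
    simpa using h.nodup_left.append (singleton hC).nodup_left hX
  nodup_right := by
    have hY : (b :: A).Disjoint (a :: Y) := fun x hx hx' ↦
      hdisj (mem_append_right B hx) ((h.mem_iff x).1 (mem_append_right X hx'))
    exact (singleton hC).nodup_right.append h.nodup_right hY
  mem_iff x := by
    rw [flatten_cons, mem_append (t := ls.flatten), ← h.mem_iff]
    grind
  length_eq := by
    have := h.length_eq
    simp only [flatten_cons, length_append, length_cons] at this ⊢
    omega

theorem exists_length_left_eq {r : ℕ} (hne : ∀ l ∈ ls, l ≠ []) (hnodup : ls.flatten.Nodup)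
    (hr : ls.length ≤ r + 1) (hr' : r < ls.flatten.length) :
    ∃ X a Y, IsSplitWord ls X a Y ∧ X.length = r := by
  have exists_cut (l : List α) {j : ℕ} (hj : j < l.length) :
      ∃ B b A, l = B ++ b :: A ∧ B.length = j :=
    ⟨l.take j, l[j], l.drop (j + 1), by simp, by simp; omega⟩
  induction ls generalizing r with
  | nil => simp at hr'
  | cons l ls ih =>
    rw [forall_mem_cons] at hne
    rw [flatten_cons] at hnodup
    simp only [flatten_cons, length_cons, length_append] at hr hr'
    rcases eq_or_ne ls [] with rfl | hls
    · obtain ⟨B, b, A, rfl, hB⟩ := exists_cut l (j := r) (by simpa using hr')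
      exact ⟨B, b, A, singleton (by simpa using hnodup), hB⟩
    · have hl := length_pos_iff.2 hne.1
      have hpos := length_pos_iff.2 hls
      have hle := length_le_length_flatten hne.2
      -- Cut `l` as late as possible while leaving `ls.length` letters to the other cycles.
      obtain ⟨i, j, hj, rfl, hi, hi'⟩ : ∃ i j, j < l.length ∧ r = i + 1 + j ∧
          ls.length ≤ i + 1 ∧ i < ls.flatten.length :=
        ⟨r - 1 - min (l.length - 1) (r - ls.length), min (l.length - 1) (r - ls.length),
          by omega, by omega, by omega, by omega⟩
      obtain ⟨X, a, Y, hword, hX⟩ := ih hne.2 hnodup.of_append_right hi hi'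
      obtain ⟨B, b, A, rfl, hB⟩ := exists_cut l hj
      exact ⟨X ++ a :: B, b, A ++ a :: Y,
        hword.cons hnodup.of_append_left (disjoint_of_nodup_append hnodup), by simp; omega⟩

theorem isCycleNotation_cons (h : IsSplitWord ls X a Y) (hls : IsCycleNotation (ls ++ ls') π) :
    IsCycleNotation ((a :: Y) :: ls') ((formPerm (X ++ [a]))⁻¹ * π) where
  ne_nil l hl := by
    rcases mem_cons.1 hl with rfl | hl
    · exact cons_ne_nil a Y
    · exact hls.ne_nil l (mem_append_right ls hl)
  nodup := by
    have hnodup : (ls.flatten ++ ls'.flatten).Nodup := by simpa using hls.nodup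
    exact h.nodup_right.append hnodup.of_append_right fun x hx ↦
      disjoint_of_nodup_append hnodup ((h.mem_iff x).1 (mem_append_right X hx))
  prod_eq := by
    rw [eq_inv_mul_iff_mul_eq, ← hls.prod_eq, map_append, prod_append, ← h.formPerm_eq, map_cons,
      prod_cons, formPerm_append_cons X Y, mul_assoc]

end IsSplitWord

theorem IsCycleNotation.exists_isSplitWord_prefix {ls : List (List α)} {π : Equiv.Perm α} {k : ℕ}
    (h : IsCycleNotation ls π) (hk : k ≠ 0) (hkn : k ≤ ls.flatten.length) :
    ∃ ls₁ ls₂ X a Y, ls = ls₁ ++ ls₂ ∧ IsSplitWord ls₁ X a Y ∧ (X ++ [a]).length = k ∧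
      (ls₂ = [] ∨ k ≤ (a :: Y).length) := by
  have hne : ∀ l ∈ ls.take k, l ≠ [] := fun l hl ↦ h.ne_nil l (mem_of_mem_take hl)
  have hnodup : (ls.take k).flatten.Nodup :=
    h.nodup.sublist (take_sublist k ls).flatten
  have hlong : k ≤ (ls.take k).flatten.length := by
    rcases le_total ls.length k with hlk | hlk
    · rwa [take_of_length_le hlk]
    · simpa [hlk] using length_le_length_flatten hne
  obtain ⟨X, a, Y, hword, hX⟩ := IsSplitWord.exists_length_left_eq (r := k - 1) hne hnodup
    ((length_take_le k ls).trans (by omega)) (by omega)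
  refine ⟨ls.take k, ls.drop k, X, a, Y, (take_append_drop k ls).symm, hword,
    by simp; omega, ?_⟩
  rcases le_total ls.length k with hlk | hlk
  · exact .inl (drop_of_length_le hlk)
  · right
    have := hword.length_eq
    simp only [length_append, length_cons, length_take, min_eq_left hlk] at this ⊢
    omega

end CycleNotation

section Factorisation

variable {α : Type*} [DecidableEq α] [Fintype α] {k : ℕ} {L : List (Equiv.Perm α)}
  {π σ : Equiv.Perm α} {s t : Set α} {a : α}

/-- Version of `IsTransKFact` on an arbitrary finite type in which only the points of `s` are
required to lie in a single orbit of the group generated by the factors. -/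
structure IsTransKFactOn (k : ℕ) (L : List (Equiv.Perm α)) (π : Equiv.Perm α) (s : Set α) :
    Prop where
  isCycle : ∀ σ ∈ L, σ.IsCycle ∧ σ.support.card = k
  prod_eq : L.prod = π
  transitive : ∀ a ∈ s, ∀ b ∈ s, ∃ g ∈ Subgroup.closure {σ | σ ∈ L}, g a = b

theorem isTransKFactOn_univ_iff {n : ℕ} {L : List (Equiv.Perm (Fin n))} {π : Equiv.Perm (Fin n)} :
    IsTransKFactOn k L π Set.univ ↔ IsTransKFact n k L π :=
  ⟨fun h ↦ ⟨h.isCycle, h.prod_eq, fun a b ↦ h.transitive a trivial b trivial⟩,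
    fun ⟨hcycle, hprod, htrans⟩ ↦ ⟨hcycle, hprod, fun a _ b _ ↦ htrans a b⟩⟩

namespace IsTransKFactOn

theorem cons (h : IsTransKFactOn k L π s) (hσ : σ.IsCycle) (hcard : σ.support.card = k)
    (haσ : a ∈ σ.support) (has : a ∈ s) :
    IsTransKFactOn k (σ :: L) (σ * π) (σ.support ∪ s) where
  isCycle := List.forall_mem_cons.2 ⟨⟨hσ, hcard⟩, h.isCycle⟩
  prod_eq := by rw [List.prod_cons, h.prod_eq]
  transitive := by
    have reach : ∀ x ∈ (σ.support ∪ s : Set α),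
        ∃ g ∈ Subgroup.closure {τ | τ ∈ σ :: L}, g a = x := by
      rintro x (hx | hx)
      · obtain ⟨i, hi⟩ := hσ.exists_zpow_eq (Equiv.Perm.mem_support.1 haσ)
          (Equiv.Perm.mem_support.1 hx)
        exact ⟨σ ^ i, zpow_mem (Subgroup.subset_closure (by simp)) i, hi⟩
      · obtain ⟨g, hg, hgx⟩ := h.transitive a has x hx
        exact ⟨g, Subgroup.closure_mono (fun τ ↦ List.mem_cons_of_mem σ) hg, hgx⟩
    intro x hx y hy
    obtain ⟨g, hg, rfl⟩ := reach x hx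
    obtain ⟨h, hh, rfl⟩ := reach y hy
    exact ⟨h * g⁻¹, mul_mem hh (inv_mem hg), by simp⟩

theorem mono (h : IsTransKFactOn k L π s) (hts : t ⊆ s) : IsTransKFactOn k L π t where
  isCycle := h.isCycle
  prod_eq := h.prod_eq
  transitive a ha b hb := h.transitive a (hts ha) b (hts hb)

theorem exists_transpositions (h : IsTransKFactOn k L π s) :
    ∃ S, IsTransKFactOn 2 S π s ∧ S.length = L.length * (k - 1) := by
  have exists_swaps : ∀ σ ∈ L, ∃ S : List (Equiv.Perm α),
      (∀ τ ∈ S, τ.IsSwap) ∧ S.prod = σ ∧ S.length = k - 1 := by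
    intro σ hσ
    obtain ⟨hcycle, hcard⟩ := h.isCycle σ hσ
    obtain ⟨l, hnodup, rfl, hsupp⟩ := exists_nodup_formPerm_eq hcycle
    refine ⟨List.zipWith Equiv.swap l l.tail,
      fun τ ↦ isSwap_of_mem_zipWith_swap_tail hnodup, rfl, ?_⟩
    simp [← hcard, ← hsupp, List.toFinset_card_of_nodup hnodup]
  choose! swaps hswap hprod hlength using exists_swaps
  refine ⟨L.flatMap swaps, ⟨fun τ hτ ↦ ?_, ?_, fun a ha b hb ↦ ?_⟩, ?_⟩
  · obtain ⟨σ, hσ, hτσ⟩ := List.mem_flatMap.1 hτ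
    have hτ := hswap σ hσ τ hτσ
    exact ⟨hτ.isCycle, Equiv.Perm.card_support_eq_two.2 hτ⟩
  · rw [List.flatMap_def, List.prod_flatten, List.map_map, ← h.prod_eq]
    exact congrArg List.prod (List.map_congr_left hprod |>.trans L.map_id)
  · obtain ⟨g, hg, hgab⟩ := h.transitive a ha b hb
    refine ⟨g, (Subgroup.closure_le _).2 (fun σ hσ ↦ ?_) hg, hgab⟩
    rw [← hprod σ hσ]
    exact Subgroup.list_prod_mem _ fun τ hτ ↦
      Subgroup.subset_closure (List.mem_flatMap.2 ⟨σ, hσ, hτ⟩)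
  · rw [List.length_flatMap, List.map_congr_left hlength]
    simp

end IsTransKFactOn

theorem IsCycleNotation.isTransKFactOn_nil {ls : List (List α)} (h : IsCycleNotation ls π)
    (hlen : ls.flatten.length + ls.length = 2) :
    IsTransKFactOn k [] π {x | x ∈ ls.flatten} := by
  have hle := length_le_length_flatten h.ne_nil
  have hne : ls ≠ [] := by
    rintro rfl
    simp at hlen
  have hpos := List.length_pos_iff.2 hne
  obtain ⟨l, rfl⟩ := List.length_eq_one_iff.1 (by omega : ls.length = 1)
  obtain ⟨x, rfl⟩ := List.length_eq_one_iff.1 (by simpa using hlen : l.length = 1)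
  exact ⟨by simp, by simpa using h.prod_eq, fun a ha b hb ↦ ⟨1, one_mem _, by simp_all⟩⟩

theorem IsSplitWord.isTransKFactOn_cons {ls ls' : List (List α)} {X Y : List α}
    (h : IsSplitWord ls X a Y) (hk : 2 ≤ k) (hX : (X ++ [a]).length = k)
    (hL : IsTransKFactOn k L π {x | x ∈ ((a :: Y) :: ls').flatten}) :
    IsTransKFactOn k ((X ++ [a]).formPerm :: L) ((X ++ [a]).formPerm * π)
      {x | x ∈ (ls ++ ls').flatten} := by
  have hsupp := support_formPerm_of_two_le_length h.nodup_left (hX ▸ hk)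
  have hcard : (X ++ [a]).formPerm.support.card = k := by
    rw [hsupp, List.toFinset_card_of_nodup h.nodup_left, hX]
  have hcycle := List.isCycle_formPerm h.nodup_left (hX ▸ hk)
  refine (hL.cons hcycle hcard (a := a) (by simp [hsupp]) (by simp)).mono fun x hx ↦ ?_
  rw [Set.mem_ofPred, List.flatten_append, List.mem_append, ← h.mem_iff] at hx
  simp only [hsupp, Set.mem_union, Finset.mem_coe, List.mem_toFinset, Set.mem_ofPred,
    List.flatten_cons]
  grind

theorem IsCycleNotation.exists_isTransKFactOn {ls : List (List α)} {m : ℕ}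
    (h : IsCycleNotation ls π) (hk : 2 ≤ k)
    (hlen : ls.flatten.length + ls.length = m * (k - 1) + 2)
    (hkn : m ≠ 0 → k ≤ ls.flatten.length) :
    ∃ L, IsTransKFactOn k L π {x | x ∈ ls.flatten} ∧ L.length = m := by
  induction m generalizing ls π with
  | zero => exact ⟨[], h.isTransKFactOn_nil (by simpa using hlen), rfl⟩
  | succ m ih =>
    obtain ⟨ls₁, ls₂, X, a, Y, rfl, hword, hX, hY⟩ :=
      h.exists_isSplitWord_prefix (by omega : k ≠ 0) (hkn m.succ_ne_zero)
    have hword_len := hword.length_eq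
    simp only [List.length_append, List.length_cons, List.length_nil] at hword_len hX
    simp only [List.flatten_append, List.length_append, Nat.add_mul] at hlen
    have hlen' : ((a :: Y) :: ls₂).flatten.length + ((a :: Y) :: ls₂).length =
        m * (k - 1) + 2 := by
      simp only [List.flatten_cons, List.length_append, List.length_cons]
      omega
    have hkn' : m ≠ 0 → k ≤ ((a :: Y) :: ls₂).flatten.length := by
      intro hm
      have hmk := Nat.le_mul_of_pos_left (k - 1) (Nat.pos_of_ne_zero hm)
      rcases hY with rfl | hY
      · rw [List.length_singleton] at hlen'
        omega
      · rw [List.flatten_cons, List.length_append]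
        omega
    obtain ⟨L, hL, rfl⟩ := ih (hword.isCycleNotation_cons h) hlen' hkn'
    refine ⟨(X ++ [a]).formPerm :: L, ?_, List.length_cons⟩
    simpa only [mul_inv_cancel_left] using hword.isTransKFactOn_cons hk (by simpa using hX) hL

end Factorisation

theorem exists_isTransKFact_of_dvd {n k : ℕ} (hn : 1 ≤ n) (hk : 2 ≤ k) {π : Equiv.Perm (Fin n)}
    (hdvd : k - 1 ∣ n + kappa π - 2) (hkn : n + kappa π - 2 ≠ 0 → k ≤ n) :
    ∃ L, IsTransKFact n k L π ∧ L.length * (k - 1) = n + kappa π - 2 := by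
  obtain ⟨m, hm⟩ := hdvd
  obtain ⟨ls, hls, hκ, hmem⟩ := IsCycleNotation.exists_forall_mem_flatten π
  have hκ : ls.length = kappa π := by rw [hκ, Fintype.card_fin, kappa]
  have hflat : ls.flatten.length = n := by
    have huniv : ls.flatten.toFinset = Finset.univ :=
      Finset.eq_univ_of_forall fun x ↦ List.mem_toFinset.2 (hmem x)
    rw [← List.toFinset_card_of_nodup hls.nodup, huniv, Finset.card_fin]
  have hpos : ls.length ≠ 0 := by
    intro h
    rw [List.length_eq_zero_iff.1 h, List.flatten_nil, List.length_nil] at hflat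
    omega
  obtain ⟨L, hL, rfl⟩ := hls.exists_isTransKFactOn (m := m) hk (by rw [mul_comm, ← hm]; omega)
    fun hm0 ↦ (hkn (hm ▸ mul_ne_zero (by omega) hm0)).trans_eq hflat.symm
  refine ⟨L, isTransKFactOn_univ_iff.1 (hL.mono fun x _ ↦ hmem x), ?_⟩
  rw [hm, mul_comm]

theorem le_length_mul_of_isTransKFact {n k N : ℕ} {π : Equiv.Perm (Fin n)}
    {L : List (Equiv.Perm (Fin n))}
    (hlow : ∀ S : List (Equiv.Perm (Fin n)), IsTransKFact n 2 S π → N ≤ S.length)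
    (hL : IsTransKFact n k L π) : N ≤ L.length * (k - 1) := by
  obtain ⟨S, hS, hlen⟩ := (isTransKFactOn_univ_iff.2 hL).exists_transpositions
  exact hlen ▸ hlow S (isTransKFactOn_univ_iff.1 hS)

theorem mu_k_formula_from_mu_two_general {n k : ℕ} (hn : 1 ≤ n) (hk : 2 ≤ k)
    {π : Equiv.Perm (Fin n)}
    (hlow : ∀ S : List (Equiv.Perm (Fin n)), IsTransKFact n 2 S π → n + kappa π - 2 ≤ S.length)
    (hdvd : k - 1 ∣ n + kappa π - 2)
    {L : List (Equiv.Perm (Fin n))} (hL : IsTransKFact n k L π)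
    (hmin : ∀ L' : List (Equiv.Perm (Fin n)), IsTransKFact n k L' π → L.length ≤ L'.length) :
    L.length * (k - 1) = n + kappa π - 2 := by
  have hge : n + kappa π - 2 ≤ L.length * (k - 1) := le_length_mul_of_isTransKFact hlow hL
  have hkn : n + kappa π - 2 ≠ 0 → k ≤ n := by
    intro hne
    have hLne : L ≠ [] := by
      rintro rfl
      simp_all
    obtain ⟨σ, hσ⟩ := List.exists_mem_of_ne_nil L hLne
    simpa [(hL.1 σ hσ).2] using Finset.card_le_univ σ.support
  obtain ⟨L', hL', hlen⟩ := exists_isTransKFact_of_dvd hn hk hdvd hkn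
  exact le_antisymm (hlen ▸ Nat.mul_le_mul_right (k - 1) (hmin L' hL')) hge

/-- Assuming the transposition case (`μ₂(π) = n + κ(π) − 2`, lower bound and
achievability), a minimal transitive ordered factorisation of `π` into `k`-cycles
has exactly `(n + κ(π) − 2)/(k−1)` factors, i.e. its length times `k−1` equals
`n + κ(π) − 2`, provided `k−1` divides `n + κ(π) − 2`. -/
theorem mu_k_formula_from_mu_two (n k : ℕ) (hn : 1 ≤ n) (hk : 2 ≤ k)
    (hlow : ∀ (π : Equiv.Perm (Fin n)) (L : List (Equiv.Perm (Fin n))),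
      IsTransKFact n 2 L π → L.length ≥ n + kappa π - 2)
    (hach : ∀ π : Equiv.Perm (Fin n), ∃ L : List (Equiv.Perm (Fin n)),
      IsTransKFact n 2 L π ∧ L.length = n + kappa π - 2)
    (π : Equiv.Perm (Fin n)) (hdvd : (k - 1) ∣ n + kappa π - 2)
    (L : List (Equiv.Perm (Fin n))) (hL : IsTransKFact n k L π)
    (hmin : ∀ L' : List (Equiv.Perm (Fin n)), IsTransKFact n k L' π → L.length ≤ L'.length) :
    L.length * (k - 1) = n + kappa π - 2 :=
  mu_k_formula_from_mu_two_general hn hk (hlow π) hdvd hL hmin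
end

section
/- The formal power series w(x) = ∑_{m≥0} (1+(k−1)m)^{m−1}/m! · x^{1+(k−1)m} satisfies the differential equation x·w′(x)·(1 − (k−1)·w(x)^{k−1}) = w(x). -/
open PowerSeries

/-- The explicit series `w(x) = ∑_{m≥0} (1+(k−1)m)^{m−1}/m! · x^{1+(k−1)m}`. -/
noncomputable def wSeries (k : ℕ) : PowerSeries ℚ :=
  PowerSeries.mk fun n =>
    if 1 ≤ n ∧ (k - 1) ∣ (n - 1) then
      ((n : ℚ) ^ ((((n - 1) / (k - 1) : ℕ) : ℤ) - 1)) / (Nat.factorial ((n - 1) / (k - 1)))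
    else 0

/-!
With `d = k - 1` put `A_s(z) = ∑ s (s + d n)^(n-1) z^n / n!` and `B_r(z) = ∑ (r + d n)^n z^n / n!`,
so that `w(x) = x A_1(x^d)` and `w'(x) = B_1(x^d)`. Abel's binomial identity says
`A_s B_r = B_{r+s}`. Cancelling `B_0` gives `A_s A_t = A_{s+t}`, hence `A_1 ^ d = A_d`, and
comparing coefficients gives `A_s = B_s - d z B_{s+d} = B_s (1 - d z A_d)`. For `s = 1` and
`z = x^d` this is the differential equation divided by `x`.
-/

open Finset
open scoped Nat

section AbelPolynomials

variable {R : Type*} [CommSemiring R]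

/-- The value at `s` of the `n`-th Abel polynomial `x (x - a n) ^ (n - 1)` with parameter
`a = -d`. At `n = 0` it is the constant polynomial `1`, whence the separate case. -/
def abelPoly (d s : R) : ℕ → R
  | 0 => 1
  | n + 1 => s * (s + d * (n + 1 : ℕ)) ^ n

theorem add_mul_mul_abelPoly (d s : R) (n : ℕ) :
    (s + d * n) * abelPoly d s n = s * (s + d * n) ^ n := by
  cases n with
  | zero => simp [abelPoly]
  | succ n => rw [abelPoly]; ring

theorem abelPoly_mul_pow (d s : R) {i l m : ℕ} (h : i + l = m + 1) :
    abelPoly d s i * (s + d * i) ^ l = s * (s + d * i) ^ m := by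
  cases l with
  | zero => obtain rfl : i = m + 1 := h; simp [abelPoly]
  | succ l =>
    obtain rfl : i + l = m := by omega
    rw [pow_succ', ← mul_assoc, mul_comm (abelPoly d s i), add_mul_mul_abelPoly, mul_assoc, pow_add]

end AbelPolynomials

section FiniteSums

theorem choose_mul_choose_left_comm (i j l : ℕ) :
    (i + (j + l)).choose i * (j + l).choose j = (j + (i + l)).choose j * (i + l).choose i := by
  apply Nat.cast_injective (R := ℚ)
  simp only [Nat.cast_mul, Nat.cast_add_choose]
  rw [add_left_comm i j l]
  field

theorem sum_antidiagonal_choose_mul_choose_left_comm {M : Type*} [AddCommMonoid M]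
    (f : ℕ → ℕ → ℕ → M) (n : ℕ) :
    ∑ p ∈ antidiagonal n, ∑ q ∈ antidiagonal p.2,
        (n.choose p.1 * p.2.choose q.1) • f p.1 q.1 q.2 =
      ∑ p ∈ antidiagonal n, ∑ q ∈ antidiagonal p.2,
        (n.choose p.1 * p.2.choose q.1) • f q.1 p.1 q.2 := by
  simp only [sum_sigma']
  refine sum_nbij' (fun x ↦ ⟨(x.2.1, x.1.1 + x.2.2), (x.1.1, x.2.2)⟩)
    (fun x ↦ ⟨(x.2.1, x.1.1 + x.2.2), (x.1.1, x.2.2)⟩) ?_ ?_ ?_ ?_ ?_ <;>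
    rintro ⟨⟨i, m⟩, ⟨j, l⟩⟩ h <;>
    obtain ⟨rfl, rfl⟩ : i + m = n ∧ j + l = m := by simpa using h
  · simp [add_left_comm]
  · simp [add_left_comm]
  · rfl
  · rfl
  · dsimp only
    rw [choose_mul_choose_left_comm, add_left_comm]

variable {R : Type*} [CommRing R]

theorem sum_antidiagonal_choose_mul_neg_one_pow_mul_pow_eq_zero (s d : R) {j n : ℕ} (hj : j < n) :
    ∑ p ∈ antidiagonal n, (n.choose p.1 : R) * (-1) ^ p.2 * (s + d * p.1) ^ j = 0 := by
  let P : Polynomial R := (Polynomial.C s + Polynomial.C d * Polynomial.X) ^ j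
  have natDegree_lt : P.natDegree < n := by
    have : P.natDegree ≤ j := by unfold P; compute_degree!
    exact this.trans_lt hj
  have h := congrFun (Polynomial.fwdDiff_iter_eq_zero_of_degree_lt natDegree_lt) 0
  rw [fwdDiff_iter_eq_sum_shift] at h
  simpa [P, Finset.Nat.sum_antidiagonal_eq_sum_range_succ_mk, mul_comm d,
    mul_comm ((-1 : R) ^ _)] using h

theorem sum_antidiagonal_choose_mul_abelPoly_mul_neg_pow_eq_zero (d s : R) (m : ℕ) :
    ∑ p ∈ antidiagonal (m + 1),
      ((m + 1).choose p.1 : R) * (abelPoly d s p.1 * (-(s + d * p.1)) ^ p.2) = 0 := by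
  calc
    _ = s * ∑ p ∈ antidiagonal (m + 1),
          ((m + 1).choose p.1 : R) * (-1) ^ p.2 * (s + d * p.1) ^ m := by
      rw [mul_sum]
      refine sum_congr rfl fun p hp ↦ ?_
      rw [neg_pow, mul_left_comm (abelPoly d s p.1), abelPoly_mul_pow d s (mem_antidiagonal.1 hp)]
      ring
    _ = 0 := by
      rw [sum_antidiagonal_choose_mul_neg_one_pow_mul_pow_eq_zero s d m.lt_succ_self, mul_zero]

theorem abel_binomial_identity (d s r : R) (n : ℕ) :
    ∑ p ∈ antidiagonal n, (n.choose p.1 : R) * (abelPoly d s p.1 * (r + d * p.2) ^ p.2) =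
      (r + s + d * n) ^ n := by
  -- Expanded in powers of `N`, each coefficient below `N ^ n` is a finite difference whose order
  -- exceeds the degree, hence zero.
  set N : R := r + s + d * n
  have expand_pow {p : ℕ × ℕ} (hp : p ∈ antidiagonal n) :
      (r + d * p.2) ^ p.2 =
        ∑ q ∈ antidiagonal p.2, p.2.choose q.1 • (N ^ q.1 * (-(s + d * p.1)) ^ q.2) := by
    rw [← (Commute.all _ _).add_pow']
    congr 1
    simp only [N, ← mem_antidiagonal.1 hp, Nat.cast_add]
    ring
  calc
    _ = ∑ p ∈ antidiagonal n, ∑ q ∈ antidiagonal p.2, (n.choose p.1 * p.2.choose q.1) •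
          (N ^ q.1 * (abelPoly d s p.1 * (-(s + d * p.1)) ^ q.2)) := by
      refine sum_congr rfl fun p hp ↦ ?_
      rw [expand_pow hp, mul_sum, mul_sum]
      refine sum_congr rfl fun q _ ↦ ?_
      simp only [nsmul_eq_mul, Nat.cast_mul]
      ring
    _ = ∑ p ∈ antidiagonal n, n.choose p.1 * N ^ p.1 * ∑ q ∈ antidiagonal p.2,
          (p.2.choose q.1 : R) * (abelPoly d s q.1 * (-(s + d * q.1)) ^ q.2) := by
      rw [sum_antidiagonal_choose_mul_choose_left_comm
        fun i j l ↦ N ^ j * (abelPoly d s i * (-(s + d * i)) ^ l)]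
      simp only [nsmul_eq_mul, Nat.cast_mul, mul_sum]
      refine sum_congr rfl fun p _ ↦ sum_congr rfl fun q _ ↦ ?_
      ring
    _ = N ^ n := by
      rw [sum_eq_single_of_mem (n, 0) (by simp)]
      · simp [abelPoly]
      · rintro ⟨j, _ | m⟩ hp hne
        · simp_all
        · rw [sum_antidiagonal_choose_mul_abelPoly_mul_neg_pow_eq_zero, mul_zero]

end FiniteSums

section Series

theorem derivative_X_mul_expand {R : Type*} [CommRing R] {d : ℕ} (hd : d ≠ 0) (f : R⟦X⟧) :
    derivative R (X * expand d hd f) =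
      expand d hd (PowerSeries.mk fun m ↦ (1 + d * m) * coeff m f) := by
  ext n
  rw [coeff_derivative, coeff_succ_X_mul, coeff_expand, coeff_expand]
  split_ifs with h
  · obtain ⟨m, rfl⟩ := h
    rw [Nat.mul_div_cancel_left m (Nat.pos_of_ne_zero hd), coeff_mk]
    push_cast
    ring
  · rw [zero_mul]

variable {K : Type*} [Field K]

/-- The exponential generating function `A_s` of the Abel polynomials. -/
def abelSeries (d s : K) : K⟦X⟧ :=
  PowerSeries.mk fun n ↦ abelPoly d s n / n !

/-- The companion `B_r` of `abelSeries`: the exponential generating function of `(r + d n) ^ n`. -/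
def shiftedPowSeries (d r : K) : K⟦X⟧ :=
  PowerSeries.mk fun n ↦ (r + d * n) ^ n / n !

theorem isUnit_shiftedPowSeries (d r : K) : IsUnit (shiftedPowSeries d r) := by
  rw [isUnit_iff_constantCoeff, ← coeff_zero_eq_constantCoeff_apply]
  simp [shiftedPowSeries]

theorem abelSeries_zero (d : K) : abelSeries d 0 = 1 := by
  ext (_ | n) <;> simp [abelSeries, abelPoly, coeff_one]

theorem derivative_X_mul_expand_abelSeries {d : ℕ} (hd : d ≠ 0) :
    derivative K (X * expand d hd (abelSeries (d : K) 1)) =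
      expand d hd (shiftedPowSeries (d : K) 1) := by
  rw [derivative_X_mul_expand]
  congr 1
  ext m
  simp [abelSeries, shiftedPowSeries, ← mul_div_assoc, add_mul_mul_abelPoly]

variable [CharZero K]

theorem abelSeries_mul_shiftedPowSeries (d s r : K) :
    abelSeries d s * shiftedPowSeries d r = shiftedPowSeries d (r + s) := by
  ext n
  simp only [abelSeries, shiftedPowSeries, coeff_mul, coeff_mk]
  rw [← abel_binomial_identity, sum_div]
  refine sum_congr rfl fun p hp ↦ ?_
  rw [← mem_antidiagonal.1 hp, Nat.cast_add_choose]
  have factorial_ne_zero := Nat.cast_ne_zero (R := K).2 (p.1 + p.2).factorial_ne_zero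
  field

theorem abelSeries_mul (d s t : K) :
    abelSeries d s * abelSeries d t = abelSeries d (s + t) := by
  apply (isUnit_shiftedPowSeries d 0).mul_right_cancel
  rw [mul_assoc]
  simp only [abelSeries_mul_shiftedPowSeries]
  rw [add_assoc, add_comm t]

theorem abelSeries_pow (d s : K) (n : ℕ) : abelSeries d s ^ n = abelSeries d (n * s) := by
  induction n with
  | zero => simp [abelSeries_zero]
  | succ n ih => rw [pow_succ, ih, abelSeries_mul, Nat.cast_succ, add_one_mul]

theorem shiftedPowSeries_sub_C_mul_X_mul (d s : K) :
    shiftedPowSeries d s - C d * (X * shiftedPowSeries d (s + d)) = abelSeries d s := by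
  ext n
  rw [map_sub, coeff_C_mul]
  cases n with
  | zero => simp [abelSeries, shiftedPowSeries, abelPoly]
  | succ n =>
    have shift : s + d + d * n = s + d * (n + 1 : ℕ) := by push_cast; ring
    simp only [coeff_succ_X_mul, abelSeries, shiftedPowSeries, abelPoly, coeff_mk, shift,
      Nat.factorial_succ, Nat.cast_mul]
    push_cast
    field

theorem shiftedPowSeries_mul_one_sub (d s : K) :
    shiftedPowSeries d s * (1 - C d * (X * abelSeries d d)) = abelSeries d s := by
  rw [← shiftedPowSeries_sub_C_mul_X_mul d s, ← abelSeries_mul_shiftedPowSeries d d s]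
  ring

theorem X_mul_expand_abelSeries_satisfies_ode {d : ℕ} (hd : d ≠ 0) :
    derivative K (X * expand d hd (abelSeries (d : K) 1)) *
        (1 - (d : K⟦X⟧) * (X * expand d hd (abelSeries (d : K) 1)) ^ d) =
      expand d hd (abelSeries (d : K) 1) := by
  have h := congrArg (expand d hd) (shiftedPowSeries_mul_one_sub (d : K) 1)
  have pow_eq : abelSeries (d : K) d = abelSeries (d : K) 1 ^ d := by rw [abelSeries_pow, mul_one]
  rw [derivative_X_mul_expand_abelSeries, mul_pow]
  simpa only [pow_eq, map_mul, map_sub, map_one, map_natCast, map_pow, expand_X] using h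

end Series

theorem wSeries_succ {d : ℕ} (hd : d ≠ 0) :
    wSeries (d + 1) = X * expand d hd (abelSeries (d : ℚ) 1) := by
  ext n
  cases n with
  | zero => simp [wSeries]
  | succ n =>
    rw [coeff_succ_X_mul, coeff_expand]
    simp only [wSeries, coeff_mk, abelSeries, Nat.add_sub_cancel]
    by_cases h : d ∣ n
    · obtain ⟨m, rfl⟩ := h
      rw [Nat.mul_div_cancel_left m (Nat.pos_of_ne_zero hd)]
      cases m <;> simp [abelPoly, add_comm]
    · simp [h]

/-- The explicit series `w` satisfies `x·w′·(1 − (k−1)·w^{k−1}) = w`. -/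
theorem wSeries_satisfies_ode (k : ℕ) (hk : 2 ≤ k) :
    PowerSeries.X * (wSeries k).derivativeFun *
        (1 - ((k - 1 : ℕ) : PowerSeries ℚ) * (wSeries k) ^ (k - 1)) = wSeries k := by
  obtain ⟨d, rfl⟩ : ∃ d, k = d + 1 := ⟨k - 1, by omega⟩
  have hd : d ≠ 0 := by omega
  change X * derivative ℚ (wSeries (d + 1)) * _ = _
  rw [Nat.add_sub_cancel, wSeries_succ hd, mul_assoc, X_mul_expand_abelSeries_satisfies_ode]
end
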